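/- Let 0<α<1 and let φ be a Schwartz function on ℝ with supp φ ⊂ (−∞,A] for some A ∈ ℝ. Then the right Marchaud fractional derivative (D_right)^α φ(t) = (1/Γ(−α)) ∫_t^∞ (φ(τ)−φ(t))/(τ−t)^{1+α} dτ is a C^∞ function supported in (−∞,A], and for every integer k ≥ 0 there exists a constant C>0 such that |d^k/dt^k (D_right)^α φ(t)| ≤ C/(1+|t|^{1+α}) for all t ∈ ℝ. -/

import Mathlib

open MeasureTheory Real Filter Set
open scoped ENNReal Topology

noncomputable section

/-- One-sided Hardy–Littlewood maximal function `M⁻u(t) = sup_{h>0} (1/h) ∫_{t-h}^{t} |u|`. -/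
def MMinus (u : ℝ → ℝ) (t : ℝ) : ℝ≥0∞ :=
  ⨆ (h : ℝ) (_ : 0 < h), ENNReal.ofReal ((∫ τ in Set.Ioc (t - h) t, |u τ|) / h)

/-- One-sided Hardy–Littlewood maximal function `M⁺u(t) = sup_{h>0} (1/h) ∫_{t}^{t+h} |u|`. -/
def MPlus (u : ℝ → ℝ) (t : ℝ) : ℝ≥0∞ :=
  ⨆ (h : ℝ) (_ : 0 < h), ENNReal.ofReal ((∫ τ in Set.Ioc t (t + h), |u τ|) / h)

/-- A weight on ℝ: positive and locally integrable. -/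
def IsWeight (ω : ℝ → ℝ) : Prop :=
  (∀ t, 0 < ω t) ∧ MeasureTheory.LocallyIntegrable ω volume

/-- The one-sided Sawyer class `A_p^-(ℝ)`.  For `p = 1` it is the condition
`M⁺ω ≤ C ω` a.e.; for `1 < p` it is the one-sided `A_p` integral condition,
where `p' = p/(p-1)` so that `1 - p' = 1 - p/(p-1)` and `1/p' = 1 - 1/p`. -/
def SawyerApMinus (p : ℝ) (ω : ℝ → ℝ) : Prop :=
  IsWeight ω ∧
  ((p = 1 ∧ ∃ C > 0, ∀ᵐ t ∂volume, MPlus ω t ≤ ENNReal.ofReal (C * ω t)) ∨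
   (1 < p ∧ ∃ C > 0, ∀ a h : ℝ, 0 < h →
      ((∫ τ in Set.Ioc a (a + h), ω τ) / h) ^ (1 / p) *
      ((∫ τ in Set.Ioc (a - h) a, ω τ ^ (1 - p / (p - 1))) / h) ^ (1 - 1 / p) ≤ C))

/-- The weighted measure `ω(t) dt` on ℝ, so that `L^p(ℝ,ω) = L^p(wMeasure ω)`. -/
def wMeasure (ω : ℝ → ℝ) : Measure ℝ := volume.withDensity (fun t => ENNReal.ofReal (ω t))

/-- The Marchaud left fractional derivative
`(D_left)^α u(t) = (1/Γ(-α)) ∫_{-∞}^t (u(τ)-u(t))/(t-τ)^{1+α} dτ`. -/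
def marchaudLeft (α : ℝ) (u : ℝ → ℝ) (t : ℝ) : ℝ :=
  (1 / Real.Gamma (-α)) * ∫ τ in Set.Iio t, (u τ - u t) / (t - τ) ^ (1 + α)

/-- The Marchaud right fractional derivative
`(D_right)^α φ(t) = (1/Γ(-α)) ∫_t^∞ (φ(τ)-φ(t))/(τ-t)^{1+α} dτ`. -/
def DRight (α : ℝ) (φ : ℝ → ℝ) (t : ℝ) : ℝ :=
  (1 / Real.Gamma (-α)) * ∫ τ in Set.Ioi t, (φ τ - φ t) / (τ - t) ^ (1 + α)

/-- `v` is the distributional (weak) derivative of `u` on ℝ. -/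
def HasWeakDeriv (u v : ℝ → ℝ) : Prop :=
  ∀ φ : ℝ → ℝ, ContDiff ℝ (⊤ : ℕ∞) φ → HasCompactSupport φ →
    ∫ t, u t * deriv φ t = -∫ t, v t * φ t

lemma aux_g_int (α : ℝ) (h0 : 0 < α) (h1 : α < 1) :
    IntegrableOn (fun s : ℝ => min s 1 / s ^ (1 + α)) (Ioi 0) := by
  rw [← Ioc_union_Ioi_eq_Ioi (zero_le_one' ℝ)]
  refine IntegrableOn.union ?_ ?_
  · have h : IntegrableOn (fun s : ℝ => s ^ (-α)) (Ioc 0 1) :=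
      (intervalIntegrable_iff_integrableOn_Ioc_of_le zero_le_one).1
        (intervalIntegral.intervalIntegrable_rpow' (by linarith))
    refine h.congr_fun (fun s hs => ?_) measurableSet_Ioc
    have hs0 : 0 < s := hs.1
    simp only [min_eq_left hs.2]
    rw [Real.rpow_add hs0, Real.rpow_one, Real.rpow_neg hs0.le]
    have := Real.rpow_pos_of_pos hs0 α
    field_simp
  · have h : IntegrableOn (fun s : ℝ => s ^ (-(1 + α))) (Ioi 1) :=
      integrableOn_Ioi_rpow_of_lt (by linarith) one_pos
    refine h.congr_fun (fun s hs => ?_) measurableSet_Ioi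
    have hs1 : 1 < s := hs
    simp only [min_eq_right hs1.le]
    rw [Real.rpow_neg (by linarith), one_div]

lemma aux_shift (α : ℝ) (u : ℝ → ℝ) (t : ℝ) :
    DRight α u t =
      (1 / Real.Gamma (-α)) * ∫ s in Ioi (0 : ℝ), (u (t + s) - u t) / s ^ (1 + α) := by
  unfold DRight
  congr 1
  rw [← integral_indicator measurableSet_Ioi, ← integral_indicator measurableSet_Ioi,
    ← integral_add_left_eq_self _ t]
  congr 1
  ext s
  simp only [indicator, mem_Ioi]
  have h : t < t + s ↔ 0 < s := by simp
  simp only [h, add_sub_cancel_left]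

lemma aux_decay (ψ : SchwartzMap ℝ ℝ) (k : ℕ) :
    ∃ C : ℝ, 0 < C ∧ ∀ x, |x| ^ k * |ψ x| ≤ C := by
  obtain ⟨C, hC, h⟩ := ψ.decay k 0
  exact ⟨C, hC, fun x => by simpa using h x⟩

lemma aux_mvt (ψ : SchwartzMap ℝ ℝ) (t s M : ℝ) (hs : 0 < s)
    (hM : ∀ x ∈ Icc t (t + s), |deriv ψ x| ≤ M) : |ψ (t + s) - ψ t| ≤ M * s := by
  have := (convex_Icc t (t + s)).norm_image_sub_le_of_norm_deriv_le (f := ψ) (C := M)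
    (fun x _ => ψ.differentiableAt) (fun x hx => hM x hx)
    (left_mem_Icc.2 (by linarith)) (right_mem_Icc.2 (by linarith))
  simpa [abs_of_pos hs] using this

/-- Uniform bound on the increment. -/
lemma aux_inc (ψ : SchwartzMap ℝ ℝ) :
    ∃ K : ℝ, 0 < K ∧ ∀ t s, 0 < s → |ψ (t + s) - ψ t| ≤ K * min s 1 := by
  obtain ⟨C, hC, h⟩ := aux_decay ψ 0
  obtain ⟨D, hD, h'⟩ := aux_decay (SchwartzMap.derivCLM ℝ ℝ ψ) 0
  simp only [pow_zero, one_mul, SchwartzMap.derivCLM_apply] at h h'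
  refine ⟨2 * C + D, by positivity, fun t s hs => ?_⟩
  rcases le_total s 1 with h1 | h1
  · rw [min_eq_left h1]
    have := aux_mvt ψ t s D hs (fun x _ => h' x)
    nlinarith
  · rw [min_eq_right h1]
    have := abs_sub (ψ (t + s)) (ψ t)
    have := h (t + s)
    have := h t
    linarith

lemma aux_inc_decay (α : ℝ) (h0 : 0 < α) (h1 : α < 1) (ψ : SchwartzMap ℝ ℝ) :
    ∃ K : ℝ, 0 < K ∧ ∀ t s, 0 < s → 1 ≤ |t| →
      |t| ^ (1 + α) * |ψ (t + s) - ψ t| ≤ K * min s 1 + 4 * (s ^ (1 + α) * |ψ (t + s)|) := by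
  obtain ⟨C, hC, h⟩ := aux_decay ψ 2
  obtain ⟨D, hD, h'⟩ := aux_decay (SchwartzMap.derivCLM ℝ ℝ ψ) 3
  simp only [SchwartzMap.derivCLM_apply] at h'
  refine ⟨2 * C + 8 * D, by positivity, fun t s hs ht => ?_⟩
  have hp : |t| ^ (1 + α) ≤ |t| ^ 2 := by
    rw [← Real.rpow_natCast]
    exact Real.rpow_le_rpow_of_exponent_le ht (by push_cast; linarith)
  have hT : 0 < |t| := by linarith
  have hm : 0 < min s 1 := lt_min hs one_pos
  have hsα : 0 < s ^ (1 + α) := Real.rpow_pos_of_pos hs _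
  rcases le_total s (|t| / 2) with hst | hst
  · have hM : ∀ x ∈ Icc t (t + s), |deriv ψ x| ≤ 8 * D / |t| ^ 3 := by
      intro x hx
      have hx1 : |t| / 2 ≤ |x| := by
        have : |t| ≤ |x| + |t - x| := by
          have := abs_add_le x (t - x); simpa using this
        have : |t - x| ≤ s := by
          rw [abs_le]; constructor <;> linarith [hx.1, hx.2]
        linarith
      have h3 : (|t| / 2) ^ 3 ≤ |x| ^ 3 := by gcongr
      rw [le_div_iff₀ (by positivity)]
      have := h' x
      have := mul_le_mul_of_nonneg_right h3 (abs_nonneg (deriv ψ x))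
      nlinarith
    have hi := aux_mvt ψ t s _ hs hM
    have h5 : |t| ^ (1 + α) * |ψ (t + s) - ψ t| ≤ |t| ^ 2 * (8 * D / |t| ^ 3 * s) :=
      mul_le_mul hp hi (abs_nonneg _) (by positivity)
    have h6 : |t| ^ 2 * (8 * D / |t| ^ 3 * s) = 8 * D * (s / |t|) := by field_simp
    have h7 : s / |t| ≤ min s 1 :=
      le_min (div_le_self hs.le ht) ((div_le_one hT).2 (by linarith))
    have h8 : 8 * D * (s / |t|) ≤ 8 * D * min s 1 := by gcongr
    have h9 : 0 ≤ 4 * (s ^ (1 + α) * |ψ (t + s)|) := by positivity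
    nlinarith
  · have hs2 : 1 / 2 ≤ min s 1 := le_min (by linarith) (by norm_num)
    have h2 : |t| ^ (1 + α) ≤ 4 * s ^ (1 + α) := by
      calc |t| ^ (1 + α) ≤ (2 * s) ^ (1 + α) :=
            Real.rpow_le_rpow hT.le (by linarith) (by linarith)
        _ = 2 ^ (1 + α) * s ^ (1 + α) := Real.mul_rpow (by norm_num) hs.le
        _ ≤ 2 ^ (2 : ℝ) * s ^ (1 + α) := by
            gcongr
            · norm_num
            · linarith
        _ = 4 * s ^ (1 + α) := by norm_num
    have h3 : |t| ^ (1 + α) * |ψ t| ≤ C :=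
      (mul_le_mul_of_nonneg_right hp (abs_nonneg _)).trans (h t)
    have h4 := mul_le_mul_of_nonneg_right h2 (abs_nonneg (ψ (t + s)))
    have h5 : |t| ^ (1 + α) * |ψ (t + s) - ψ t|
        ≤ |t| ^ (1 + α) * |ψ (t + s)| + |t| ^ (1 + α) * |ψ t| := by
      rw [← mul_add]; gcongr; exact abs_sub _ _
    nlinarith

lemma aux_meas (α : ℝ) (ψ : SchwartzMap ℝ ℝ) (t : ℝ) :
    AEStronglyMeasurable (fun s : ℝ => (ψ (t + s) - ψ t) / s ^ (1 + α))
      (volume.restrict (Ioi 0)) := by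
  have h := ψ.continuous
  have : Measurable (fun s : ℝ => ψ (t + s) - ψ t) := by
    apply Continuous.measurable; fun_prop
  exact (this.div (by fun_prop)).aestronglyMeasurable

lemma aux_bound (α K : ℝ) (ψ : SchwartzMap ℝ ℝ)
    (hK : ∀ t s, 0 < s → |ψ (t + s) - ψ t| ≤ K * min s 1) (t s : ℝ) (hs : 0 < s) :
    ‖(ψ (t + s) - ψ t) / s ^ (1 + α)‖ ≤ K * (min s 1 / s ^ (1 + α)) := by
  have hsα : 0 < s ^ (1 + α) := Real.rpow_pos_of_pos hs _
  rw [Real.norm_eq_abs, abs_div, abs_of_pos hsα, ← mul_div_assoc]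
  gcongr
  exact hK t s hs

lemma aux_deriv (α : ℝ) (h0 : 0 < α) (h1 : α < 1) (ψ : SchwartzMap ℝ ℝ) (t : ℝ) :
    HasDerivAt (DRight α ψ) (DRight α (SchwartzMap.derivCLM ℝ ℝ ψ) t) t := by
  have e : DRight α ψ = fun t => (1 / Real.Gamma (-α)) *
      ∫ s in Ioi (0 : ℝ), (ψ (t + s) - ψ t) / s ^ (1 + α) := by
    ext t; exact aux_shift α ψ t
  rw [e, aux_shift]
  refine HasDerivAt.const_mul _ ?_
  obtain ⟨K, hK0, hK⟩ := aux_inc ψ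
  obtain ⟨L, hL0, hL⟩ := aux_inc (SchwartzMap.derivCLM ℝ ℝ ψ)
  have hg := aux_g_int α h0 h1
  refine (hasDerivAt_integral_of_dominated_loc_of_deriv_le (s := univ)
    (F := fun t s => (ψ (t + s) - ψ t) / s ^ (1 + α))
    (F' := fun t s => (SchwartzMap.derivCLM ℝ ℝ ψ (t + s) - SchwartzMap.derivCLM ℝ ℝ ψ t)
      / s ^ (1 + α))
    (bound := fun s => L * (min s 1 / s ^ (1 + α)))
    univ_mem (Eventually.of_forall fun x => aux_meas α ψ x) ?_ (aux_meas α _ t) ?_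
    (hg.const_mul L) ?_).2
  · refine (hg.const_mul K).mono' (aux_meas α ψ t) ?_
    filter_upwards [ae_restrict_mem measurableSet_Ioi] with s hs
    exact aux_bound α K ψ hK t s hs
  · filter_upwards [ae_restrict_mem measurableSet_Ioi] with s hs x _
    exact aux_bound α L _ hL x s hs
  · refine Eventually.of_forall fun s x _ => ?_
    simp only [SchwartzMap.derivCLM_apply]
    exact (((ψ.hasDerivAt (x + s)).comp_add_const x s).sub (ψ.hasDerivAt x)).div_const _

lemma aux_decay_D (α : ℝ) (h0 : 0 < α) (h1 : α < 1) (ψ : SchwartzMap ℝ ℝ) :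
    ∃ C > 0, ∀ t : ℝ, |DRight α ψ t| ≤ C / (1 + |t| ^ (1 + α)) := by
  obtain ⟨K, hK0, hK⟩ := aux_inc ψ
  obtain ⟨L, hL0, hL⟩ := aux_inc_decay α h0 h1 ψ
  have hg := aux_g_int α h0 h1
  set G := ∫ s in Ioi (0 : ℝ), min s 1 / s ^ (1 + α) with hG
  set N := ∫ s, |ψ s| with hN
  have hG0 : 0 ≤ G := setIntegral_nonneg measurableSet_Ioi fun s hs => by
    have : 0 < s := hs
    have : 0 < min s 1 := lt_min hs one_pos
    positivity
  have hN0 : 0 ≤ N := integral_nonneg fun s => abs_nonneg _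
  set c := |1 / Real.Gamma (-α)| with hc
  have hc0 : 0 ≤ c := abs_nonneg _
  refine ⟨c * (2 * (K * G) + L * G + 4 * N) + 1, by positivity, fun t => ?_⟩
  have hTα : 0 ≤ |t| ^ (1 + α) := Real.rpow_nonneg (abs_nonneg _) _
  rw [le_div_iff₀ (by positivity), aux_shift, abs_mul, ← hc]
  set I := ∫ s in Ioi (0 : ℝ), (ψ (t + s) - ψ t) / s ^ (1 + α) with hI
  have b1 : |I| ≤ K * G := by
    rw [hG, ← integral_const_mul]
    rw [← Real.norm_eq_abs, hI]
    refine norm_integral_le_of_norm_le (hg.const_mul K) ?_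
    filter_upwards [ae_restrict_mem measurableSet_Ioi] with s hs
    exact aux_bound α K ψ hK t s hs
  have key : |I| * (1 + |t| ^ (1 + α)) ≤ 2 * (K * G) + L * G + 4 * N := by
    rcases le_total |t| 1 with ht | ht
    · have : |t| ^ (1 + α) ≤ 1 := Real.rpow_le_one (abs_nonneg _) ht (by linarith)
      have : |I| * (1 + |t| ^ (1 + α)) ≤ (K * G) * 2 :=
        mul_le_mul b1 (by linarith) (by positivity) (by positivity)
      have : 0 ≤ L * G := by positivity
      linarith
    · have hψ : Integrable (fun s => |ψ (t + s)|) :=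
        (ψ.integrable (μ := volume)).abs.comp_add_left t
      have hN' : ∫ s in Ioi (0 : ℝ), |ψ (t + s)| ≤ N := by
        rw [hN, ← integral_add_left_eq_self (fun s => |ψ s|) t]
        exact setIntegral_le_integral hψ (Eventually.of_forall fun s => abs_nonneg _)
      have b2 : |(|t| ^ (1 + α) * I)| ≤ L * G + 4 * ∫ s in Ioi (0 : ℝ), |ψ (t + s)| := by
        rw [hG, hI, ← integral_const_mul, ← integral_const_mul, ← integral_const_mul,
          ← integral_add (hg.const_mul L) (hψ.integrableOn.const_mul 4)]
        rw [← Real.norm_eq_abs]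
        refine norm_integral_le_of_norm_le
          ((hg.const_mul L).add (hψ.integrableOn.const_mul 4)) ?_
        filter_upwards [ae_restrict_mem measurableSet_Ioi] with s hs
        have hs0 : 0 < s := hs
        have hsα : 0 < s ^ (1 + α) := Real.rpow_pos_of_pos hs0 _
        rw [Real.norm_eq_abs, abs_mul, abs_div, abs_of_pos hsα, abs_of_nonneg hTα,
          ← mul_div_assoc, div_le_iff₀ hsα]
        refine (hL t s hs0 ht).trans (le_of_eq ?_)
        field_simp
      rw [abs_mul, abs_of_nonneg hTα] at b2
      have : 0 ≤ K * G := by positivity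
      nlinarith
  have := mul_le_mul_of_nonneg_left key hc0
  nlinarith

lemma aux_contDiff (α : ℝ) (h0 : 0 < α) (h1 : α < 1) (n : ℕ) : ∀ ψ : SchwartzMap ℝ ℝ,
    ContDiff ℝ n (DRight α ψ) := by
  have hd : ∀ ψ : SchwartzMap ℝ ℝ, deriv (DRight α ψ) =
      DRight α (SchwartzMap.derivCLM ℝ ℝ ψ) := fun ψ => by
    ext t; exact (aux_deriv α h0 h1 ψ t).deriv
  induction n with
  | zero =>
    intro ψ
    exact contDiff_zero.2 (continuous_iff_continuousAt.2 fun t =>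
      (aux_deriv α h0 h1 ψ t).continuousAt)
  | succ n ih =>
    intro ψ
    push_cast
    rw [contDiff_succ_iff_deriv, hd]
    exact ⟨fun t => (aux_deriv α h0 h1 ψ t).differentiableAt, by simp, ih _⟩

lemma aux_iter (α : ℝ) (h0 : 0 < α) (h1 : α < 1) (k : ℕ) : ∀ ψ : SchwartzMap ℝ ℝ,
    ∃ χ : SchwartzMap ℝ ℝ, iteratedDeriv k (DRight α ψ) = DRight α χ := by
  induction k with
  | zero => exact fun ψ => ⟨ψ, iteratedDeriv_zero⟩
  | succ n ih =>
    intro ψ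
    obtain ⟨χ, h⟩ := ih (SchwartzMap.derivCLM ℝ ℝ ψ)
    refine ⟨χ, ?_⟩
    rw [iteratedDeriv_succ', ← h]
    congr 1
    ext t; exact (aux_deriv α h0 h1 ψ t).deriv

/-- If `φ` is a Schwartz function supported in `(-∞, A]` and `0 < α < 1`,
then `(D_right)^α φ` is `C^∞`, supported in `(-∞, A]`, and every derivative of it is bounded
by `C/(1+|t|^{1+α})` for some constant `C > 0`. -/
theorem statement0 (α : ℝ) (hα : α ∈ Set.Ioo (0 : ℝ) 1) (φ : SchwartzMap ℝ ℝ) (A : ℝ)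
    (hsupp : Function.support (fun t => φ t) ⊆ Set.Iic A) :
    ContDiff ℝ (⊤ : ℕ∞) (DRight α (fun t => φ t)) ∧
    Function.support (DRight α (fun t => φ t)) ⊆ Set.Iic A ∧
    ∀ k : ℕ, ∃ C > 0, ∀ t : ℝ,
      |iteratedDeriv k (DRight α (fun t => φ t)) t| ≤ C / (1 + |t| ^ (1 + α)) := by
  obtain ⟨h0, h1⟩ := hα
  refine ⟨?_, ?_, ?_⟩
  · rw [contDiff_infty]
    exact fun n => aux_contDiff α h0 h1 n φ
  · intro t ht
    by_contra hA
    apply ht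
    have hA' : A < t := not_le.1 hA
    have hz : ∀ x, A < x → φ x = 0 := fun x hx => by
      by_contra hne
      exact absurd (hsupp hne) (not_le.2 hx)
    unfold DRight
    rw [setIntegral_eq_zero_of_forall_eq_zero, mul_zero]
    intro x hx
    have hx' : t < x := hx
    simp [hz t hA', hz x (hA'.trans hx')]
  · intro k
    obtain ⟨χ, h⟩ := aux_iter α h0 h1 k φ
    obtain ⟨C, hC, hb⟩ := aux_decay_D α h0 h1 χ
    refine ⟨C, hC, fun t => ?_⟩
    have h' : iteratedDeriv k (DRight α (fun t => φ t)) t = DRight α χ t := congrFun h t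
    rw [h']
    exact hb t
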